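/- There exists no finite set X of syllogistic rules in the fragment R*† such that the indirect derivation relation ⊩_X is both sound and complete for R*†. -/

import Mathlib

/-!
The idea is to find, for every bound `n`, a set `Γ` of formulas (`mostTrue n`) which contains every
formula or its negation, is unsatisfiable, and yet any `n` of whose members have a common model.
If every rule has fewer than `n` antecedents and is sound, then `Γ` is closed under the rules
(`mem_of_entails`). It is also closed under *reductio*: when `θ ∉ Γ`, the negation of `θ` is already
in `Γ`, so assuming it adds nothing (`mem_of_iderives`). As `Γ` contains no absurdity, none is
derivable from it, although `Γ` entails everything.

To build `Γ`, write the unary atoms as two tracks `x_p`, `z_p` indexed by positions `p`, and join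
the positions `0, …, n` into a cycle by edges `0, …, n`, edge `j` going from `j` to `j + 1` and edge
`n` from `n` to `0`. No element can have a hidden bit `x_p ⊕ z_p` that is preserved by all edges
except the last one, which flips it; but if the requirement is reversed at a single edge `i`, it
can be met. The domain of the structure `cycModel n i` is the set of all valuations meeting the
requirement reversed at `i`. Each binary atom is attached to one edge and one track, and is
such that the conjunctions of the two literals at the ends of the edge on that track become
definable by e-terms (`corner`). Thus the requirement at an edge says that certain corners on the
two tracks are disjoint (`link_mem`), and `Γ`, the set of formulas true in `cycModel n i` for all
`i ≤ n` with at most one exception, is unsatisfiable (`mostTrue_unsat`).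

On the other hand, an e-term only sees the values at the two ends of one edge on one track
(`exists_controls`), and a formula has two e-terms. The exceptional edge can be moved from `i` to
`i'` by flipping one track at each position of an arc between `i` and `i'`, or of the complementary
arc. This can be done without touching the values seen by the formula, unless its e-terms see the
two tracks of edge `i` or of edge `i'` (`exists_move`). So every formula has the same truth value
in all `cycModel n i` with at most one exception (`exists_exception`), whence `Γ` contains every
formula or its negation. Having at most one exception each, `n` formulas of `Γ` have a common model
among the `n + 1` structures (`exists_common_model`).
-/

/-!
Syllogistic logics (Pratt-Hartmann & Moss, "Logics for the Relational Syllogistic").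

Unary atoms and binary atoms are encoded by `ℕ` (two disjoint copies).
-/

namespace Syllogistic

/-- Unary literals: a unary atom `p` or its negation `p̄`. -/
inductive Lit : Type
  | pos : ℕ → Lit
  | neg : ℕ → Lit
deriving DecidableEq

/-- Binary literals: a binary atom `r` or its negation `r̄`. -/
inductive BLit : Type
  | pos : ℕ → BLit
  | neg : ℕ → BLit
deriving DecidableEq

/-- Bar (negation) on unary literals. -/
def Lit.bar : Lit → Lit
  | .pos p => .neg p
  | .neg p => .pos p

/-- Bar (negation) on binary literals. -/
def BLit.bar : BLit → BLit
  | .pos r => .neg r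
  | .neg r => .pos r

/-- A unary literal is positive if it is an atom. -/
def Lit.isPos : Lit → Prop
  | .pos _ => True
  | .neg _ => False

/-- A binary literal is positive if it is an atom. -/
def BLit.isPos : BLit → Prop
  | .pos _ => True
  | .neg _ => False

/-- e-terms: a unary literal `l`, or `∃(l,t)`, or `∀(l,t)`. -/
inductive ETerm : Type
  | lit : Lit → ETerm
  | ex : Lit → BLit → ETerm
  | al : Lit → BLit → ETerm
deriving DecidableEq

/-- The e-term consisting of a single positive unary atom. -/
def atomE (p : ℕ) : ETerm := .lit (.pos p)

/-- Bar on e-terms: `∀(l,t)‾ = ∃(l,t̄)` and `∃(l,t)‾ = ∀(l,t̄)`. -/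
def ETerm.bar : ETerm → ETerm
  | .lit l => .lit l.bar
  | .ex l t => .al l t.bar
  | .al l t => .ex l t.bar

/-- c-terms: a unary literal, or `∃(p,t)`/`∀(p,t)` with `p` a unary atom. -/
def ETerm.isC : ETerm → Prop
  | .lit _ => True
  | .ex l _ => l.isPos
  | .al l _ => l.isPos

/-- Positive c-terms: the literals occurring in them are positive. -/
def ETerm.isPosC : ETerm → Prop
  | .lit l => l.isPos
  | .ex l t => l.isPos ∧ t.isPos
  | .al l t => l.isPos ∧ t.isPos

/-- R*†-formulas: `∃(e,f)` or `∀(e,f)` for e-terms `e`, `f`. -/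
inductive Formula : Type
  | ex : ETerm → ETerm → Formula
  | al : ETerm → ETerm → Formula
deriving DecidableEq

/-- Negation of a formula: `∀(e,f)‾ = ∃(e,f̄)`, `∃(e,f)‾ = ∀(e,f̄)`. -/
def Formula.bar : Formula → Formula
  | .ex e f => .al e f.bar
  | .al e f => .ex e f.bar

/-- The silent identification: `∃(e,f)` with `∃(f,e)`, and `∀(e,f)` with `∀(f̄,ē)`. -/
def Formula.swap : Formula → Formula
  | .ex e f => .ex f e
  | .al e f => .al f.bar e.bar

/-- Two formulas are identified if they are equal or are swaps of each other. -/
def FormEquiv (φ ψ : Formula) : Prop := ψ = φ ∨ ψ = φ.swap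

/-- An absurdity is a formula of the form `∃(e,ē)`. -/
def IsAbsurd (φ : Formula) : Prop := ∃ e : ETerm, φ = .ex e e.bar

/-- A substitution maps unary atoms to unary atoms and binary atoms to binary atoms. -/
structure Subst where
  u : ℕ → ℕ
  b : ℕ → ℕ

def Lit.subst (g : Subst) : Lit → Lit
  | .pos p => .pos (g.u p)
  | .neg p => .neg (g.u p)

def BLit.subst (g : Subst) : BLit → BLit
  | .pos r => .pos (g.b r)
  | .neg r => .neg (g.b r)

def ETerm.subst (g : Subst) : ETerm → ETerm
  | .lit l => .lit (l.subst g)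
  | .ex l t => .ex (l.subst g) (t.subst g)
  | .al l t => .al (l.subst g) (t.subst g)

/-- Atom-wise application of a substitution to a formula. -/
def Formula.subst (g : Subst) : Formula → Formula
  | .ex e f => .ex (e.subst g) (f.subst g)
  | .al e f => .al (e.subst g) (f.subst g)

/-- A structure over a domain `A`: an interpretation of every unary atom as a
subset of `A` and of every binary atom as a binary relation on `A`.
(Non-emptiness of the domain is imposed where structures are quantified over.) -/
structure Interp (A : Type) where
  up : ℕ → Set A
  br : ℕ → Set (A × A)

def Interp.litI {A : Type} (M : Interp A) : Lit → Set A
  | .pos p => M.up p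
  | .neg p => (M.up p)ᶜ

def Interp.blitI {A : Type} (M : Interp A) : BLit → Set (A × A)
  | .pos r => M.br r
  | .neg r => (M.br r)ᶜ

/-- Interpretation of e-terms. -/
def Interp.etermI {A : Type} (M : Interp A) : ETerm → Set A
  | .lit l => M.litI l
  | .ex l t => {a | ∃ b ∈ M.litI l, (a, b) ∈ M.blitI t}
  | .al l t => {a | ∀ b ∈ M.litI l, (a, b) ∈ M.blitI t}

/-- Truth of a formula in a structure. -/
def Interp.Sat {A : Type} (M : Interp A) : Formula → Prop
  | .al e f => M.etermI e ⊆ M.etermI f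
  | .ex e f => (M.etermI e ∩ M.etermI f).Nonempty

/-- Truth of a set of formulas in a structure. -/
def Interp.SatSet {A : Type} (M : Interp A) (Θ : Set Formula) : Prop :=
  ∀ θ ∈ Θ, M.Sat θ

/-- `Θ ⊨ θ`: every structure (with non-empty domain) satisfying `Θ` satisfies `θ`. -/
def Entails (Θ : Set Formula) (θ : Formula) : Prop :=
  ∀ (A : Type), Nonempty A → ∀ M : Interp A, M.SatSet Θ → M.Sat θ

/-- `Θ` is satisfied in some structure with non-empty domain. -/
def Satisfiable (Θ : Set Formula) : Prop :=
  ∃ (A : Type), Nonempty A ∧ ∃ M : Interp A, M.SatSet Θ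

/-- A syllogistic rule: a finite set of antecedents together with a consequent. -/
structure SylRule where
  ants : Finset Formula
  con : Formula

/-- A rule is sound if its antecedents entail its consequent. -/
def SylRule.Sound (R : SylRule) : Prop := Entails (↑R.ants) R.con

/-- A rule is a rule *in* the fragment `F` if all its formulas lie in `F`. -/
def RuleIn (F : Set Formula) (R : SylRule) : Prop :=
  (∀ ψ ∈ R.ants, ψ ∈ F) ∧ R.con ∈ F

/-- The instance of a rule under a substitution. -/
def SylRule.inst (g : Subst) (R : SylRule) : SylRule :=
  ⟨R.ants.image (Formula.subst g), R.con.subst g⟩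

/-- Two rules are the same modulo the identification of formulas. -/
def RuleEquiv (R R' : SylRule) : Prop :=
  (∀ ψ ∈ R.ants, ∃ ψ' ∈ R'.ants, FormEquiv ψ ψ') ∧
  (∀ ψ' ∈ R'.ants, ∃ ψ ∈ R.ants, FormEquiv ψ ψ') ∧
  FormEquiv R.con R'.con

/-- The direct derivation relation `⊢_X` determined by a set `X` of syllogistic
rules: premises may be used, and instances of rules applied; formulas are
treated up to the silent identification. -/
inductive Derives (X : Set SylRule) : Set Formula → Formula → Prop
  | mem {Θ : Set Formula} {θ : Formula} : θ ∈ Θ → Derives X Θ θ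
  | rule {Θ : Set Formula} (R : SylRule) (g : Subst) :
      R ∈ X → (∀ ψ ∈ R.ants, Derives X Θ (ψ.subst g)) →
      Derives X Θ (R.con.subst g)
  | ident {Θ : Set Formula} {φ ψ : Formula} :
      Derives X Θ φ → FormEquiv φ ψ → Derives X Θ ψ

/-- The indirect derivation relation `⊩_X`: as `⊢_X`, together with
*reductio ad absurdum*. -/
inductive IDerives (X : Set SylRule) : Set Formula → Formula → Prop
  | mem {Θ : Set Formula} {θ : Formula} : θ ∈ Θ → IDerives X Θ θ
  | rule {Θ : Set Formula} (R : SylRule) (g : Subst) :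
      R ∈ X → (∀ ψ ∈ R.ants, IDerives X Θ (ψ.subst g)) →
      IDerives X Θ (R.con.subst g)
  | ident {Θ : Set Formula} {φ ψ : Formula} :
      IDerives X Θ φ → FormEquiv φ ψ → IDerives X Θ ψ
  | raa {Θ : Set Formula} {θ b : Formula} :
      IsAbsurd b → IDerives X (Θ ∪ {θ.bar}) b → IDerives X Θ θ

/-- Soundness of a derivation relation for the fragment `F`. -/
def SoundFor (F : Set Formula) (D : Set Formula → Formula → Prop) : Prop :=
  ∀ (Θ : Set Formula) (θ : Formula), Θ ⊆ F → θ ∈ F → D Θ θ → Entails Θ θ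

/-- Completeness of a derivation relation for the fragment `F`. -/
def CompleteFor (F : Set Formula) (D : Set Formula → Formula → Prop) : Prop :=
  ∀ (Θ : Set Formula) (θ : Formula), Θ ⊆ F → θ ∈ F → Entails Θ θ → D Θ θ

/-- Refutation-completeness for the fragment `F`: every unsatisfiable set of
`F`-formulas derives some absurdity. -/
def RefutationCompleteFor (F : Set Formula) (D : Set Formula → Formula → Prop) : Prop :=
  ∀ Θ : Set Formula, Θ ⊆ F → ¬ Satisfiable Θ → ∃ b, IsAbsurd b ∧ D Θ b

/-- Consistency of a set of formulas with respect to `⊩_X`. -/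
def Consistent (X : Set SylRule) (Θ : Set Formula) : Prop :=
  ¬ ∃ b, IsAbsurd b ∧ IDerives X Θ b

/-! ### The six fragments -/

/-- The fragment `S`: `∃(p,l)`, `∃(l,p)`, `∀(p,l)`, `∀(l,p̄)`. -/
def FragS : Set Formula :=
  {φ | (∃ (p : ℕ) (l : Lit), φ = .ex (atomE p) (.lit l)) ∨
       (∃ (p : ℕ) (l : Lit), φ = .ex (.lit l) (atomE p)) ∨
       (∃ (p : ℕ) (l : Lit), φ = .al (atomE p) (.lit l)) ∨
       (∃ (p : ℕ) (l : Lit), φ = .al (.lit l) (.lit (.neg p)))}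

/-- The fragment `S†`: `∃(l,m)`, `∀(l,m)` for unary literals `l`, `m`. -/
def FragSdag : Set Formula :=
  {φ | ∃ l m : Lit, φ = .ex (.lit l) (.lit m) ∨ φ = .al (.lit l) (.lit m)}

/-- The fragment `R`: `∃(p,c)`, `∃(c,p)`, `∀(p,c)`, `∀(c,p̄)` for a c-term `c`. -/
def FragR : Set Formula :=
  {φ | ∃ (p : ℕ) (c : ETerm), c.isC ∧
       (φ = .ex (atomE p) c ∨ φ = .ex c (atomE p) ∨
        φ = .al (atomE p) c ∨ φ = .al c (.lit (.neg p)))}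

/-- The fragment `R†`: `∃(l,e)`, `∃(e,l)`, `∀(l,e)`, `∀(e,l)` for an e-term `e`. -/
def FragRdag : Set Formula :=
  {φ | ∃ (l : Lit) (e : ETerm),
       φ = .ex (.lit l) e ∨ φ = .ex e (.lit l) ∨
       φ = .al (.lit l) e ∨ φ = .al e (.lit l)}

/-- The fragment `R*`: `∃(c⁺,d)`, `∃(d,c⁺)`, `∀(c⁺,d)`, `∀(d,c⁺‾)` with `c⁺` a
positive c-term and `d` a c-term. -/
def FragRstar : Set Formula :=
  {φ | ∃ c d : ETerm, c.isPosC ∧ d.isC ∧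
       (φ = .ex c d ∨ φ = .ex d c ∨ φ = .al c d ∨ φ = .al d c.bar)}

/-- The fragment `R*†`: all formulas. -/
def FragRstardag : Set Formula := Set.univ

/-- The six syllogistic fragments. -/
def IsFragment (F : Set Formula) : Prop :=
  F = FragS ∨ F = FragSdag ∨ F = FragR ∨ F = FragRdag ∨ F = FragRstar ∨ F = FragRstardag

/-! ### Rule sets -/

/-- The rule set `S`: (D1), (D2), (D3), (B), (A), (T), (I), (X). -/
def RuleSetS : Set SylRule :=
  {R | (∃ (p q : ℕ) (l : Lit),
          R = ⟨{.al (atomE q) (.lit l), .ex (atomE p) (atomE q)}, .ex (atomE p) (.lit l)⟩) ∨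
       (∃ (p q : ℕ) (l : Lit),
          R = ⟨{.ex (atomE p) (.lit l), .al (atomE p) (atomE q)}, .ex (atomE q) (.lit l)⟩) ∨
       (∃ (p q : ℕ) (l : Lit),
          R = ⟨{.al (atomE q) (.lit l.bar), .ex (atomE p) (.lit l)}, .ex (atomE p) (.lit (.neg q))⟩) ∨
       (∃ (p q : ℕ) (l : Lit),
          R = ⟨{.al (atomE p) (atomE q), .al (atomE q) (.lit l)}, .al (atomE p) (.lit l)⟩) ∨
       (∃ (p : ℕ) (l : Lit),
          R = ⟨{.al (atomE p) (.lit (.neg p))}, .al (atomE p) (.lit l)⟩) ∨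
       (∃ p : ℕ, R = ⟨∅, .al (atomE p) (atomE p)⟩) ∨
       (∃ (p : ℕ) (l : Lit),
          R = ⟨{.ex (atomE p) (.lit l)}, .ex (atomE p) (atomE p)⟩) ∨
       (∃ φ ψ : Formula, φ ∈ FragS ∧ ψ ∈ FragS ∧ R = ⟨{ψ, ψ.bar}, φ⟩)}

/-- The rule set `S†`: (D), (B), (A), (T), (I), (N), (X). -/
def RuleSetSdag : Set SylRule :=
  {R | (∃ l m n : Lit,
          R = ⟨{.ex (.lit l) (.lit n), .al (.lit l) (.lit m)}, .ex (.lit m) (.lit n)⟩) ∨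
       (∃ l m n : Lit,
          R = ⟨{.al (.lit l) (.lit m), .al (.lit m) (.lit n)}, .al (.lit l) (.lit n)⟩) ∨
       (∃ l m : Lit, R = ⟨{.al (.lit l) (.lit l.bar)}, .al (.lit l) (.lit m)⟩) ∨
       (∃ l : Lit, R = ⟨∅, .al (.lit l) (.lit l)⟩) ∨
       (∃ l m : Lit, R = ⟨{.ex (.lit l) (.lit m)}, .ex (.lit l) (.lit l)⟩) ∨
       (∃ l : Lit, R = ⟨{.al (.lit l.bar) (.lit l)}, .ex (.lit l) (.lit l)⟩) ∨
       (∃ φ ψ : Formula, φ ∈ FragSdag ∧ ψ ∈ FragSdag ∧ R = ⟨{ψ, ψ.bar}, φ⟩)}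

/-- The rules (B), (T) and (A) of the rule set `S†`. -/
def RuleSetBTA : Set SylRule :=
  {R | (∃ l m n : Lit,
          R = ⟨{.al (.lit l) (.lit m), .al (.lit m) (.lit n)}, .al (.lit l) (.lit n)⟩) ∨
       (∃ l : Lit, R = ⟨∅, .al (.lit l) (.lit l)⟩) ∨
       (∃ l m : Lit, R = ⟨{.al (.lit l) (.lit l.bar)}, .al (.lit l) (.lit m)⟩)}

/-- The rule set `R`: (D1), (D2), (D3), (B), (T), (I), (A), (II), (∀∀), (∃∃), (∀∃). -/
def RuleSetR : Set SylRule :=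
  {R | (∃ (p q : ℕ) (c : ETerm), c.isC ∧
          R = ⟨{.ex (atomE p) (atomE q), .al (atomE q) c}, .ex (atomE p) c⟩) ∨
       (∃ (p q : ℕ) (c : ETerm), c.isC ∧
          R = ⟨{.al (atomE p) (atomE q), .ex (atomE p) c}, .ex (atomE q) c⟩) ∨
       (∃ (p q : ℕ) (c : ETerm), c.isC ∧
          R = ⟨{.al (atomE q) c.bar, .ex (atomE p) c}, .ex (atomE p) (.lit (.neg q))⟩) ∨
       (∃ (p q : ℕ) (c : ETerm), c.isC ∧
          R = ⟨{.al (atomE p) (atomE q), .al (atomE q) c}, .al (atomE p) c⟩) ∨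
       (∃ p : ℕ, R = ⟨∅, .al (atomE p) (atomE p)⟩) ∨
       (∃ (p : ℕ) (c : ETerm), c.isC ∧
          R = ⟨{.ex (atomE p) c}, .ex (atomE p) (atomE p)⟩) ∨
       (∃ (p : ℕ) (c : ETerm), c.isC ∧
          R = ⟨{.al (atomE p) (.lit (.neg p))}, .al (atomE p) c⟩) ∨
       (∃ (p q : ℕ) (t : BLit),
          R = ⟨{.ex (atomE p) (.ex (.pos q) t)}, .ex (atomE q) (atomE q)⟩) ∨
       (∃ (p q q' : ℕ) (t : BLit),
          R = ⟨{.al (atomE p) (.al (.pos q') t), .ex (atomE q) (atomE q')},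
               .al (atomE p) (.ex (.pos q) t)⟩) ∨
       (∃ (p q q' : ℕ) (t : BLit),
          R = ⟨{.ex (atomE p) (.ex (.pos q) t), .al (atomE q) (atomE q')},
               .ex (atomE p) (.ex (.pos q') t)⟩) ∨
       (∃ (p q q' : ℕ) (t : BLit),
          R = ⟨{.al (atomE p) (.ex (.pos q) t), .al (atomE q) (atomE q')},
               .al (atomE p) (.ex (.pos q') t)⟩)}

/-- The rule set `R*`: (T), (I), (B), (D1), (D2), (J), (K), (L), (II), (Z), (W). -/
def RuleSetRstar : Set SylRule :=
  {R | (∃ c : ETerm, c.isPosC ∧ R = ⟨∅, .al c c⟩) ∨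
       (∃ c d : ETerm, c.isPosC ∧ d.isC ∧ R = ⟨{.ex c d}, .ex c c⟩) ∨
       (∃ b c d : ETerm, b.isPosC ∧ c.isPosC ∧ d.isC ∧
          R = ⟨{.al b c, .al c d}, .al b d⟩) ∨
       (∃ b c d : ETerm, b.isPosC ∧ c.isPosC ∧ d.isC ∧
          R = ⟨{.ex b c, .al c d}, .ex b d⟩) ∨
       (∃ b c d : ETerm, b.isPosC ∧ c.isPosC ∧ d.isC ∧
          R = ⟨{.al b c, .ex b d}, .ex c d⟩) ∨
       (∃ p q r : ℕ,
          R = ⟨{.al (atomE p) (atomE q)},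
               .al (.al (.pos q) (.pos r)) (.al (.pos p) (.pos r))⟩) ∨
       (∃ p q r : ℕ,
          R = ⟨{.al (atomE p) (atomE q)},
               .al (.ex (.pos p) (.pos r)) (.ex (.pos q) (.pos r))⟩) ∨
       (∃ p q r : ℕ,
          R = ⟨{.ex (atomE p) (atomE q)},
               .al (.al (.pos p) (.pos r)) (.ex (.pos q) (.pos r))⟩) ∨
       (∃ p q r : ℕ,
          R = ⟨{.ex (atomE q) (.ex (.pos p) (.pos r))}, .ex (atomE p) (atomE p)⟩) ∨
       (∃ (p r : ℕ) (c : ETerm), c.isPosC ∧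
          R = ⟨{.al (atomE p) (.lit (.neg p))}, .al c (.al (.pos p) (.pos r))⟩) ∨
       (∃ p r : ℕ,
          R = ⟨{.al (atomE p) (.lit (.neg p))},
               .ex (.al (.pos p) (.pos r)) (.al (.pos p) (.pos r))⟩)}

/-! ### Auxiliary notions for particular statements -/

/-- Universal S†-formulas. -/
def IsUnivSdag (φ : Formula) : Prop := ∃ l m : Lit, φ = .al (.lit l) (.lit m)

/-- Existential S†-formulas. -/
def IsExSdag (φ : Formula) : Prop := ∃ l m : Lit, φ = .ex (.lit l) (.lit m)

/-- The closure `V^Φ` of a set of unary literals: all `m` with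
`Φ ⊢_BTA ∀(l,m)` for some `l ∈ V`. -/
def litClosure (Φ : Set Formula) (V : Set Lit) : Set Lit :=
  {m | ∃ l ∈ V, Derives RuleSetBTA Φ (.al (.lit l) (.lit m))}

/-- Membership in a set of formulas, modulo the silent identification. -/
def MemMod (Γ : Set Formula) (φ : Formula) : Prop := ∃ ψ ∈ Γ, FormEquiv φ ψ

/-- The reachability relation `c ⇒ d` determined by `Γ`. -/
def Reach (Γ : Set Formula) (c d : ETerm) : Prop :=
  c = d ∨ ∃ (k : ℕ) (p : ℕ → ℕ), c = atomE (p 0) ∧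
    MemMod Γ (.al (atomE (p k)) d) ∧
    ∀ i < k, MemMod Γ (.al (atomE (p i)) (atomE (p (i + 1))))

/-- `V ⇒ d` for a set `V` of c-terms. -/
def ReachSet (Γ : Set Formula) (V : Set ETerm) (d : ETerm) : Prop :=
  ∃ c ∈ V, Reach Γ c d

/-- The witness sets `B_k`; the formal object `b_{V,i}` is encoded as the
pair `(V, i)`. -/
def BSet (Γ : Set Formula) : ℕ → Set (Set ETerm × ℕ)
  | 0 => {x | ∃ (p : ℕ) (c : ETerm), c.isC ∧ MemMod Γ (.ex (atomE p) c) ∧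
            x = ({atomE p, c}, 0)}
  | k + 1 => BSet Γ k ∪
      {x | ∃ (p i : ℕ), (i = 1 ∨ i = 2) ∧
        (∃ y ∈ BSet Γ k, ∃ t : BLit, ReachSet Γ y.1 (.ex (.pos p) t)) ∧
        x = ({atomE p}, i)}

/-- The witness set `B = ⋃_k B_k`. -/
def BAll (Γ : Set Formula) : Set (Set ETerm × ℕ) := ⋃ k, BSet Γ k

/-- Condition (C). -/
def CondC (Γ : Set Formula) : Prop :=
  ∃ (V : Set ETerm) (i : ℕ) (W : Set ETerm) (j : ℕ),
    (V, i) ∈ BAll Γ ∧ (W, j) ∈ BAll Γ ∧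
    ∃ q o r : ℕ,
      ((ReachSet Γ V (atomE q) ∧ ReachSet Γ V (.lit (.neg q))) ∨
       (ReachSet Γ V (.ex (.pos q) (.neg r)) ∧ ReachSet Γ V (.al (.pos o) (.pos r)) ∧
         Reach Γ (atomE q) (atomE o)) ∨
       (ReachSet Γ V (.al (.pos q) (.neg r)) ∧ ReachSet Γ V (.ex (.pos o) (.pos r)) ∧
         Reach Γ (atomE o) (atomE q)) ∨
       (ReachSet Γ V (.al (.pos q) (.neg r)) ∧ ReachSet Γ V (.al (.pos o) (.pos r)) ∧
         ReachSet Γ W (atomE q) ∧ ReachSet Γ W (atomE o)))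

/-- The set `Γ` of R-formulas used in the proof that `R` admits no sound
and complete direct syllogistic system (indices `0,…,n-1`). -/
def GammaSet (n : ℕ) (p : ℕ → ℕ) (r : ℕ) : Set Formula :=
  {φ | (∃ i, i + 1 < n ∧ φ = .al (atomE (p i)) (.ex (.pos (p (i + 1))) (.pos r))) ∨
       φ = .al (atomE (p 0)) (.al (.pos (p (n - 1))) (.pos r)) ∨
       (∃ q : ℕ, φ = .al (atomE q) (atomE q)) ∨
       (∃ i j, i < j ∧ j < n ∧ φ = .al (atomE (p i)) (.lit (.neg (p j))))}

/-- `Γ` is R*-complete: for every R*-formula `θ`, `θ ∈ Γ` or `θ̄ ∈ Γ`. -/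
def RstarComplete (Γ : Set Formula) : Prop :=
  ∀ θ ∈ FragRstar, θ ∈ Γ ∨ Formula.bar θ ∈ Γ

/-- Domain of the canonical structure for `Γ`: triples `(c₁,c₂,Q)` of two
positive c-terms and a quantifier (`Bool`, with `true` rendering `∃` and
`false` rendering `∀`) such that `Γ ⊩_{R*} ∃(c₁,c₂)`. -/
abbrev CanonA (Γ : Set Formula) : Type :=
  {x : ETerm × ETerm × Bool //
    x.1.isPosC ∧ x.2.1.isPosC ∧ IDerives RuleSetRstar Γ (.ex x.1 x.2.1)}

/-- The canonical structure constructed from `Γ`. -/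
def CanonInterp (Γ : Set Formula) : Interp (CanonA Γ) where
  up p := {x | IDerives RuleSetRstar Γ (.al x.val.1 (atomE p)) ∨
               IDerives RuleSetRstar Γ (.al x.val.2.1 (atomE p))}
  br r := {ab |
      (∃ c ∈ ({ab.1.val.1, ab.1.val.2.1} : Set ETerm),
       ∃ d ∈ ({ab.2.val.1, ab.2.val.2.1} : Set ETerm),
       ∃ q : ℕ,
         IDerives RuleSetRstar Γ (.al c (.al (.pos q) (.pos r))) ∧
         IDerives RuleSetRstar Γ (.al d (atomE q))) ∨
      (ab.2.val.2.2 = true ∧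
       ∃ q : ℕ, ab.2.val.1 = atomE q ∧ ab.2.val.2.1 = atomE q ∧
       ∃ c ∈ ({ab.1.val.1, ab.1.val.2.1} : Set ETerm),
         IDerives RuleSetRstar Γ (.al c (.ex (.pos q) (.pos r))))}


/-! ### Semantics of bar and swap -/

theorem blitI_bar {A : Type} (M : Interp A) (t : BLit) : M.blitI t.bar = (M.blitI t)ᶜ := by
  cases t <;> simp [BLit.bar, Interp.blitI]

theorem etermI_bar {A : Type} (M : Interp A) (e : ETerm) : M.etermI e.bar = (M.etermI e)ᶜ := by
  cases e with
  | lit l => cases l <;> simp [ETerm.bar, Lit.bar, Interp.etermI, Interp.litI]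
  | ex l t => ext a; simp [ETerm.bar, Interp.etermI, blitI_bar]
  | al l t => ext a; simp [ETerm.bar, Interp.etermI, blitI_bar]

theorem sat_bar {A : Type} (M : Interp A) (φ : Formula) : M.Sat φ.bar ↔ ¬ M.Sat φ := by
  cases φ with
  | ex e f =>
    simp only [Formula.bar, Interp.Sat, etermI_bar, Set.subset_compl_iff_disjoint_right,
      Set.not_nonempty_iff_eq_empty, Set.disjoint_iff_inter_eq_empty]
  | al e f =>
    simp only [Formula.bar, Interp.Sat, etermI_bar, Set.inter_compl_nonempty_iff]

theorem not_sat_absurd {A : Type} (M : Interp A) {φ : Formula} (h : IsAbsurd φ) :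
    ¬ M.Sat φ := by
  obtain ⟨e, rfl⟩ := h
  simp [Interp.Sat, etermI_bar]

theorem sat_swap {A : Type} (M : Interp A) (φ : Formula) : M.Sat φ.swap ↔ M.Sat φ := by
  cases φ with
  | ex e f => simp [Formula.swap, Interp.Sat, Set.inter_comm]
  | al e f => simp [Formula.swap, Interp.Sat, etermI_bar]

theorem sat_of_formEquiv {A : Type} (M : Interp A) {φ ψ : Formula} (h : FormEquiv φ ψ)
    (hφ : M.Sat φ) : M.Sat ψ := by
  rcases h with rfl | rfl
  · exact hφ
  · exact (sat_swap M φ).2 hφ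

/-! ### The structures `cycModel n i` -/

/-- The end point of edge `j`, which starts at `j`. The edges `0, …, n` form a cycle through
the positions `0, …, n`; the edges `j > n` are a harmless tail. -/
def tgt (n j : ℕ) : ℕ := if j = n then 0 else j + 1

/-- The hidden bit of the valuation `α` at position `p`. -/
def hid (α : Bool → ℕ → Bool) (p : ℕ) : Bool := α true p ^^ α false p

/-- `Good n i α`: along the cycle the hidden bit of `α` is preserved by every edge `j < n` and
flipped by edge `n`, except that at edge `i` the requirement is reversed. -/
def Good (n i : ℕ) (α : Bool → ℕ → Bool) : Prop :=
  ∀ j ≤ n, (hid α j ^^ hid α (tgt n j)) = (decide (j = n) ^^ decide (j = i))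

/-- The unary atoms, indexed by a track (`true` or `false`) and a position. -/
def uEnc : Bool × ℕ ≃ ℕ := Equiv.boolProdNatEquivNat

/-- The binary atoms, indexed by a track, a sign and an edge. -/
def bEnc : Bool × Bool × ℕ ≃ ℕ :=
  (Equiv.prodCongr (Equiv.refl Bool) Equiv.boolProdNatEquivNat).trans Equiv.boolProdNatEquivNat

/-- The two truth values of `α` on track `g` that the binary atom `(g, s, j)` looks at: the value
at the start of edge `j` when `c` is `true`, and the value at its end, negated if `s` is `true`,
when `c` is `false`. -/
def look (n : ℕ) (g s : Bool) (j : ℕ) (α : Bool → ℕ → Bool) (c : Bool) : Bool :=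
  if c then α g j else (α g (tgt n j) ^^ s)

/-- The structure whose elements are the good valuations with exceptional edge `i`. Which of its
two truth values an element compares through `(g, s, j)` is selected by the second argument,
via the atom `(true, n + 1)`, whose position lies outside the cycle. -/
def cycModel (n i : ℕ) : Interp {α : Bool → ℕ → Bool // Good n i α} where
  up u := {α | α.1 (uEnc.symm u).1 (uEnc.symm u).2 = true}
  br r := {x | look n (bEnc.symm r).1 (bEnc.symm r).2.1 (bEnc.symm r).2.2 x.1.1
    (x.2.1 true (n + 1)) = true}

/-- A valuation in `cycModel n i` with prescribed values outside the cycle. -/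
def baseVal (n i : ℕ) (v w : Bool) (g : Bool) (p : ℕ) : Bool :=
  if p ≤ n then g && decide (i < p) else if g then v else w

theorem good_baseVal {n i : ℕ} (hi : i ≤ n) (v w : Bool) : Good n i (baseVal n i v w) := by
  intro j hj
  have h0 : tgt n j ≤ n := by unfold tgt; split <;> omega
  simp only [hid, baseVal, hj, h0, if_true, Bool.true_and, Bool.false_and, Bool.xor_false]
  unfold tgt
  by_cases hjn : j = n
  · subst hjn
    by_cases hji : j = i
    · simp [hji]
    · have : i < j := by omega
      simp [hji, this]
  · by_cases hji : j = i
    · subst hji; simp [hjn]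
    · by_cases hij : i < j
      · simp [hjn, hji, hij, Nat.lt_succ_of_lt hij]
      · have : ¬ i < j + 1 := by omega
        simp [hjn, hji, hij, this]

/-! ### Moving the exceptional edge -/

/-- Flipping, at every position of `W`, the track chosen by `c`. -/
def flip (W : ℕ → Bool) (c : ℕ → Bool) (α : Bool → ℕ → Bool) (g : Bool) (p : ℕ) : Bool :=
  α g p ^^ (W p && (g == c p))

theorem hid_flip (W c : ℕ → Bool) (α : Bool → ℕ → Bool) (p : ℕ) :
    hid (flip W c α) p = (hid α p ^^ W p) := by
  unfold hid flip
  cases W p <;> cases c p <;> cases α true p <;> cases α false p <;> rfl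

theorem good_flip {n i i' : ℕ} {W c : ℕ → Bool} {α : Bool → ℕ → Bool}
    (hW : ∀ j, (W j ^^ W (tgt n j)) = (decide (j = i) ^^ decide (j = i'))) (h : Good n i α) :
    Good n i' (flip W c α) := by
  intro j hj
  have h1 := h j hj
  have h2 := hW j
  rw [hid_flip, hid_flip]
  revert h1 h2
  generalize hid α j = a, hid α (tgt n j) = b, W j = x, W (tgt n j) = y,
    decide (j = n) = u, decide (j = i) = v, decide (j = i') = w
  revert a b x y u v w
  decide

/-- The arc of the cycle between the edges `i` and `i'`. -/
def arc (i i' p : ℕ) : Bool := decide (p ≤ i) ^^ decide (p ≤ i')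

theorem arc_cross {n i i' : ℕ} (hi : i ≤ n) (hi' : i' ≤ n) (j : ℕ) :
    (arc i i' j ^^ arc i i' (tgt n j)) = (decide (j = i) ^^ decide (j = i')) := by
  have key : ∀ k ≤ n, (decide (j ≤ k) ^^ decide (tgt n j ≤ k)) =
      (decide (j = k) ^^ decide (j = n)) := by
    intro k hk
    unfold tgt
    by_cases hjn : j = n
    · by_cases hjk : j = k
      · simp [hjn, ← hjk]
      · have : ¬ n ≤ k := by omega
        have : ¬ n = k := by omega
        simp_all
    · by_cases hjk : j = k
      · subst hjk; simp [hjn]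
      · by_cases h : j ≤ k
        · have : j + 1 ≤ k := by omega
          simp [*]
        · have : ¬ j + 1 ≤ k := by omega
          simp [*]
  have h1 := key i hi
  have h2 := key i' hi'
  unfold arc
  revert h1 h2
  generalize decide (j ≤ i) = a, decide (j ≤ i') = b, decide (tgt n j ≤ i) = c,
    decide (tgt n j ≤ i') = d, decide (j = i) = e, decide (j = i') = f, decide (j = n) = g
  revert a b c d e f g
  decide

/-- `p` is an end point of edge `j`. -/
def onEdge (n j p : ℕ) : Prop := p = j ∨ p = tgt n j

/-- `α` and `β` agree on track `g` at both ends of edge `j`. -/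
def Agree (n : ℕ) (g : Bool) (j : ℕ) (α β : Bool → ℕ → Bool) : Prop :=
  α g j = β g j ∧ α g (tgt n j) = β g (tgt n j)

theorem Agree.symm {n : ℕ} {g : Bool} {j : ℕ} {α β : Bool → ℕ → Bool}
    (h : Agree n g j α β) : Agree n g j β α := ⟨h.1.symm, h.2.symm⟩

theorem edge_unique {n j k p q : ℕ} (hn : 2 ≤ n) (hpq : p ≠ q) (h1 : onEdge n j p)
    (h2 : onEdge n j q) (h3 : onEdge n k p) (h4 : onEdge n k q) : j = k := by
  unfold onEdge tgt at *
  split_ifs at * <;> omega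

/-- The exceptional edge can be moved from `i` to `i'` without touching the values on two given
edges, unless these are the two tracks of `i` or of `i'`. -/
theorem exists_move {n i i' : ℕ} (hn : 2 ≤ n) (hi : i ≤ n) (hi' : i' ≤ n) (g h : Bool) (j k : ℕ)
    (hne : g ≠ h → j = k → j ≠ i ∧ j ≠ i') {α : Bool → ℕ → Bool} (hα : Good n i α) :
    ∃ α', Good n i' α' ∧ Agree n g j α α' ∧ Agree n h k α α' := by
  classical
  by_cases hgh : g = h
  · subst hgh
    refine ⟨flip (arc i i') (fun _ => !g) α, good_flip (arc_cross hi hi') hα, ?_, ?_⟩ <;>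
      constructor <;> simp [flip]
  · obtain ⟨W, hW, hWc⟩ : ∃ W : ℕ → Bool,
        (∀ j, (W j ^^ W (tgt n j)) = (decide (j = i) ^^ decide (j = i'))) ∧
        ∀ p, W p = true → onEdge n j p → onEdge n k p → False := by
      by_cases hc : ∃ q, arc i i' q = true ∧ onEdge n j q ∧ onEdge n k q
      · obtain ⟨q, hq, hqj, hqk⟩ := hc
        refine ⟨fun p => !arc i i' p, fun j => ?_, fun p hp hpj hpk => ?_⟩
        · rw [← arc_cross hi hi' j]; simp
        · -- Two shared end points force `j = k`, and then edge `j` leaves the arc.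
          have hpq : p ≠ q := by rintro rfl; simp [hq] at hp
          have hjk := edge_unique hn hpq hpj hqj hpk hqk
          obtain ⟨h1, h2⟩ := hne hgh hjk
          have hcr := arc_cross hi hi' j
          rcases hpj with rfl | rfl <;> rcases hqj with rfl | rfl <;> simp_all
      · exact ⟨arc i i', arc_cross hi hi', fun p h1 h2 h3 => hc ⟨p, h1, h2, h3⟩⟩
    refine ⟨flip W (fun p => if onEdge n j p then h else g) α, good_flip hW hα, ?_, ?_⟩
    · have key : ∀ p, onEdge n j p →
          α g p = flip W (fun p => if onEdge n j p then h else g) α g p := by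
        intro p hp
        simp [flip, hp, beq_false_of_ne hgh]
      exact ⟨key _ (.inl rfl), key _ (.inr rfl)⟩
    · have key : ∀ p, onEdge n k p →
          α h p = flip W (fun p => if onEdge n j p then h else g) α h p := by
        intro p hp
        by_cases hWp : W p = true
        · have : ¬ onEdge n j p := fun hj => hWc p hWp hj hp
          simp [flip, this, beq_false_of_ne (Ne.symm hgh)]
        · simp [flip, hWp]
      exact ⟨key _ (.inl rfl), key _ (.inr rfl)⟩

/-! ### Every formula has at most one exceptional structure -/

/-- The edge `j` and track `g` control the e-term `e`: whether a valuation lies in its extension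
depends only on the values there, uniformly in `i`. -/
def Controls (n : ℕ) (g : Bool) (j : ℕ) (e : ETerm) : Prop :=
  ∀ i ≤ n, ∀ i' ≤ n, ∀ (α : {α // Good n i α}) (α' : {α // Good n i' α}),
    Agree n g j α.1 α'.1 → α ∈ (cycModel n i).etermI e → α' ∈ (cycModel n i').etermI e

/-- The underlying unary atom of a literal. -/
def Lit.atom : Lit → ℕ
  | .pos p => p
  | .neg p => p

/-- The underlying binary atom of a literal. -/
def BLit.atom : BLit → ℕ
  | .pos p => p
  | .neg p => p

theorem mem_litI_congr {n i i' : ℕ} {l : Lit} {α : {α // Good n i α}} {α' : {α // Good n i' α}}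
    (h : α.1 (uEnc.symm l.atom).1 (uEnc.symm l.atom).2 =
      α'.1 (uEnc.symm l.atom).1 (uEnc.symm l.atom).2) :
    α ∈ (cycModel n i).litI l ↔ α' ∈ (cycModel n i').litI l := by
  cases l <;> simp_all [Interp.litI, cycModel, Lit.atom]

theorem mem_blitI_congr {n i i' : ℕ} {t : BLit} {α β : {α // Good n i α}}
    {α' β' : {α // Good n i' α}}
    (h : Agree n (bEnc.symm t.atom).1 (bEnc.symm t.atom).2.2 α.1 α'.1)
    (hβ : β.1 true (n + 1) = β'.1 true (n + 1)) :
    (α, β) ∈ (cycModel n i).blitI t ↔ (α', β') ∈ (cycModel n i').blitI t := by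
  obtain ⟨h1, h2⟩ := h
  cases t <;> simp_all [Interp.blitI, cycModel, BLit.atom, look]

/-- An element of `cycModel n i` has a counterpart in `cycModel n i'` satisfying the same unary
literals over one given atom and selecting the same value in every binary atom. -/
theorem exists_counterpart {n i i' : ℕ} (hn : 2 ≤ n) (hi : i ≤ n) (hi' : i' ≤ n) (l : Lit)
    (β : {α // Good n i α}) : ∃ β' : {α // Good n i' α},
      (β ∈ (cycModel n i).litI l ↔ β' ∈ (cycModel n i').litI l) ∧
      β.1 true (n + 1) = β'.1 true (n + 1) := by
  obtain ⟨β', h1, h2, h3⟩ := exists_move hn hi hi' true (uEnc.symm l.atom).1 (n + 1)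
    (uEnc.symm l.atom).2 (fun _ _ => by omega) β.2
  exact ⟨⟨β', h1⟩, mem_litI_congr h3.1, h2.1⟩

theorem exists_controls {n : ℕ} (hn : 2 ≤ n) (e : ETerm) : ∃ g j, Controls n g j e := by
  cases e with
  | lit l =>
    exact ⟨_, _, fun i _ i' _ α α' h hα => (mem_litI_congr (l := l) h.1).1 hα⟩
  | ex l t =>
    refine ⟨(bEnc.symm t.atom).1, (bEnc.symm t.atom).2.2, fun i hi i' hi' α α' h
      hα => ?_⟩
    obtain ⟨β, hβ, hr⟩ := hα
    obtain ⟨β', h1, h2⟩ := exists_counterpart hn hi hi' l β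
    exact ⟨β', h1.1 hβ, (mem_blitI_congr (t := t) h h2).1 hr⟩
  | al l t =>
    refine ⟨(bEnc.symm t.atom).1, (bEnc.symm t.atom).2.2, fun i hi i' hi' α α' h
      hα β hβ => ?_⟩
    obtain ⟨β', h1, h2⟩ := exists_counterpart hn hi' hi l β
    exact (mem_blitI_congr (t := t) h h2.symm).1 (hα β' (h1.1 hβ))

/-- Apart from one index, the structures `cycModel n i` agree on any given formula. -/
theorem exists_exception {n : ℕ} (hn : 2 ≤ n) (φ : Formula) : ∃ j₀, ∀ i ≤ n, ∀ i' ≤ n,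
    i ≠ j₀ → i' ≠ j₀ → (cycModel n i).Sat φ → (cycModel n i').Sat φ := by
  cases φ with
  | ex e f =>
    obtain ⟨g, j, he⟩ := exists_controls hn e
    obtain ⟨h, k, hf⟩ := exists_controls hn f
    refine ⟨j, fun i hi i' hi' hij hij' hs => ?_⟩
    obtain ⟨α, hαe, hαf⟩ := hs
    obtain ⟨α', h1, h2, h3⟩ := exists_move hn hi hi' g h j k (fun _ _ => ⟨hij.symm, hij'.symm⟩) α.2
    exact ⟨⟨α', h1⟩, he i hi i' hi' _ _ h2 hαe, hf i hi i' hi' _ _ h3 hαf⟩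
  | al e f =>
    obtain ⟨g, j, he⟩ := exists_controls hn e
    obtain ⟨h, k, hf⟩ := exists_controls hn f
    refine ⟨j, fun i hi i' hi' hij hij' hs α hα => ?_⟩
    obtain ⟨α', h1, h2, h3⟩ := exists_move hn hi' hi g h j k (fun _ _ => ⟨hij'.symm, hij.symm⟩) α.2
    exact hf i hi i' hi' ⟨α', h1⟩ α h3.symm (hs (he i' hi' i hi α ⟨α', h1⟩ h2 hα))

/-! ### The complete theory `Γ` -/

/-- The formulas true in `cycModel n i` for all `i ≤ n` with at most one exception. -/
def mostTrue (n : ℕ) : Set Formula :=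
  {φ | ∃ j₀, ∀ i ≤ n, i ≠ j₀ → (cycModel n i).Sat φ}

theorem mem_or_bar_mem {n : ℕ} (hn : 2 ≤ n) (φ : Formula) :
    φ ∈ mostTrue n ∨ φ.bar ∈ mostTrue n := by
  obtain ⟨j₀, h⟩ := exists_exception hn φ
  by_cases hφ : ∃ i ≤ n, i ≠ j₀ ∧ (cycModel n i).Sat φ
  · obtain ⟨i, hi, hij, hs⟩ := hφ
    exact .inl ⟨j₀, fun i' hi' hij' => h i hi i' hi' hij hij' hs⟩
  · refine .inr ⟨j₀, fun i hi hij => (sat_bar _ _).2 fun hs => hφ ⟨i, hi, hij, hs⟩⟩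

/-- At most `n` members of `mostTrue n` have a common model among the `cycModel n i`. -/
theorem exists_common_model {n : ℕ} {Δ : Finset Formula} (hΔ : ∀ φ ∈ Δ, φ ∈ mostTrue n)
    (hcard : Δ.card ≤ n) : ∃ i ≤ n, (cycModel n i).SatSet Δ := by
  classical
  choose! ex hex using hΔ
  obtain ⟨i, hi, hnot⟩ : ∃ i ∈ Finset.range (n + 1), i ∉ Δ.image ex := by
    apply Finset.exists_mem_notMem_of_card_lt_card
    have := Finset.card_image_le (s := Δ) (f := ex)
    simp only [Finset.card_range]
    omega
  have hi' : i ≤ n := by simpa [Nat.lt_succ_iff] using hi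
  refine ⟨i, hi', fun φ hφ => hex φ hφ i hi' ?_⟩
  rintro rfl
  exact hnot (Finset.mem_image_of_mem ex hφ)

theorem nonempty_carrier {n i : ℕ} (hi : i ≤ n) : Nonempty {α // Good n i α} :=
  ⟨⟨_, good_baseVal hi true true⟩⟩

theorem not_absurd_mem {n : ℕ} (hn : 2 ≤ n) {b : Formula} (hb : IsAbsurd b) :
    b ∉ mostTrue n := by
  intro h
  obtain ⟨i, -, hs⟩ := exists_common_model (n := n) (Δ := {b}) (by simpa using h) (by simp; omega)
  exact not_sat_absurd _ hb (hs b (by simp))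

/-- `mostTrue n` is closed under consequences of fewer than `n` premises. -/
theorem mem_of_entails {n : ℕ} (hn : 2 ≤ n) {Δ : Finset Formula} {φ : Formula}
    (hΔ : ∀ ψ ∈ Δ, ψ ∈ mostTrue n) (hcard : Δ.card < n) (h : Entails Δ φ) : φ ∈ mostTrue n := by
  rcases mem_or_bar_mem hn φ with hφ | hφ
  · exact hφ
  · obtain ⟨i, hi, hs⟩ := exists_common_model (n := n) (Δ := insert φ.bar Δ)
      (by simpa [hφ] using hΔ) ((Finset.card_insert_le _ _).trans hcard)
    have h1 : (cycModel n i).Sat φ :=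
      h _ (nonempty_carrier hi) _ fun ψ hψ => hs ψ (by simp at hψ ⊢; exact .inr hψ)
    exact absurd h1 ((sat_bar _ _).1 (hs _ (by simp)))

/-! ### `Γ` is unsatisfiable -/

/-- The literal over the atom `(g, p)` that is true where the atom has value `v`. -/
def vLit (g : Bool) (p : ℕ) (v : Bool) : Lit :=
  if v then .pos (uEnc (g, p)) else .neg (uEnc (g, p))

/-- The literal over the binary atom `(g, s, j)` that is true where the atom has value `v`. -/
def vBLit (g s : Bool) (j : ℕ) (v : Bool) : BLit :=
  if v then .pos (bEnc (g, s, j)) else .neg (bEnc (g, s, j))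

/-- The e-term describing the elements with value `v` at the start and `w` at the end of edge `j`
on track `g`: with sign `v ^^ w` both values looked at equal `v`. -/
def corner (n : ℕ) (g : Bool) (j : ℕ) (v w : Bool) : ETerm :=
  .al (vLit false (n + 1) true) (vBLit g (v ^^ w) j v)

theorem mem_litI_vLit {n i : ℕ} {g v : Bool} {p : ℕ} (α : {α // Good n i α}) :
    α ∈ (cycModel n i).litI (vLit g p v) ↔ α.1 g p = v := by
  cases v <;> simp [vLit, Interp.litI, cycModel]

theorem mem_blitI_vBLit {n i : ℕ} {g s v : Bool} {j : ℕ} (α β : {α // Good n i α}) :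
    (α, β) ∈ (cycModel n i).blitI (vBLit g s j v) ↔
      look n g s j α.1 (β.1 true (n + 1)) = v := by
  cases v <;> simp [vBLit, Interp.blitI, cycModel]

theorem corner_spec {n i : ℕ} (hi : i ≤ n) {g v w : Bool} {j : ℕ} (α : {α // Good n i α})
    (h : α ∈ (cycModel n i).etermI (corner n g j v w)) :
    α.1 g j = v ∧ α.1 g (tgt n j) = w := by
  have key : ∀ c, look n g (v ^^ w) j α.1 c = v := by
    intro c
    have := (mem_blitI_vBLit α ⟨_, good_baseVal hi c true⟩).1
      (h ⟨_, good_baseVal hi c true⟩ ((mem_litI_vLit _).2 (by simp [baseVal])))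
    simpa [baseVal] using this
  have h1 := key true
  have h2 := key false
  simp only [look, if_true, Bool.false_eq_true, if_false] at h1 h2
  refine ⟨h1, ?_⟩
  revert h2
  cases v <;> cases w <;> simp

/-- The link formulas: corners on the two tracks of an edge `j ≤ n` with the wrong parity are
disjoint. -/
theorem link_mem {n j : ℕ} (hj : j ≤ n) {v w v' w' : Bool}
    (h : ((v ^^ v') ^^ (w ^^ w')) ≠ decide (j = n)) :
    Formula.al (corner n true j v w) (corner n false j v' w').bar ∈ mostTrue n := by
  refine ⟨j, fun i hi hij α hα => ?_⟩
  rw [etermI_bar]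
  intro hα'
  obtain ⟨h1, h2⟩ := corner_spec hi α hα
  obtain ⟨h3, h4⟩ := corner_spec hi α hα'
  have hg := α.2 j hj
  simp only [hid, h1, h2, h3, h4, Ne.symm hij, decide_false, Bool.xor_false] at hg
  exact h hg

theorem pin_start_mem (n : ℕ) (g s v : Bool) (j : ℕ) :
    Formula.al (.lit (vLit g j v)) (.al (vLit true (n + 1) true) (vBLit g s j v)) ∈
      mostTrue n := by
  refine ⟨0, fun i _ _ α hα β hβ => ?_⟩
  have h1 := (mem_litI_vLit α).1 hα
  have h2 := (mem_litI_vLit β).1 hβ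
  rw [mem_blitI_vBLit, h2]
  simpa [look] using h1

theorem pin_end_mem (n : ℕ) (g s v : Bool) (j : ℕ) :
    Formula.al (.lit (vLit g (tgt n j) (v ^^ s)))
      (.al (vLit true (n + 1) false) (vBLit g s j v)) ∈ mostTrue n := by
  refine ⟨0, fun i _ _ α hα β hβ => ?_⟩
  have h1 := (mem_litI_vLit α).1 hα
  have h2 := (mem_litI_vLit β).1 hβ
  rw [mem_blitI_vBLit, h2]
  simp [look, h1]

theorem mostTrue_unsat (n : ℕ) {A : Type} [Nonempty A] (M : Interp A) :
    ¬ M.SatSet (mostTrue n) := by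
  classical
  intro hM
  obtain ⟨a⟩ := ‹Nonempty A›
  have hlit : ∀ (b : A) g p, ∃ v, b ∈ M.litI (vLit g p v) := by
    intro b g p
    by_cases h : b ∈ M.up (uEnc (g, p))
    · exact ⟨true, by simpa [vLit, Interp.litI] using h⟩
    · exact ⟨false, by simpa [vLit, Interp.litI] using h⟩
  choose val hval using hlit
  have hcorner : ∀ g j, a ∈ M.etermI (corner n g j (val a g j) (val a g (tgt n j))) := by
    intro g j b _
    -- Whichever side of the selecting atom `b` lies on, one of the pinning formulas applies.
    have hb := hval b true (n + 1)
    cases hv : val b true (n + 1) with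
    | true =>
      rw [hv] at hb
      exact hM _ (pin_start_mem n g _ _ j) (hval a g j) b hb
    | false =>
      rw [hv] at hb
      refine hM _ (pin_end_mem n g (val a g j ^^ val a g (tgt n j)) (val a g j) j) ?_ b hb
      have := hval a g (tgt n j)
      simpa [Interp.etermI, ← Bool.xor_assoc] using this
  have hpar : ∀ j ≤ n, (hid (val a) j ^^ hid (val a) (tgt n j)) = decide (j = n) := by
    intro j hj
    by_contra h
    have := hM _ (link_mem hj h) (hcorner true j)
    rw [etermI_bar] at this
    exact this (hcorner false j)
  have hconst : ∀ j ≤ n, hid (val a) j = hid (val a) 0 := by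
    intro j
    induction j with
    | zero => intro _; rfl
    | succ j ih =>
      intro hj
      have h1 := hpar j (by omega)
      have h2 : j ≠ n := by omega
      simp only [tgt, h2, if_false, decide_false, bne_eq_false_iff_eq] at h1
      rw [← h1, ih (by omega)]
  have h1 := hpar n le_rfl
  have h2 := hconst n le_rfl
  simp [tgt, h2] at h1

/-! ### Eliminating *reductio* -/

theorem mem_of_iderives {n : ℕ} (hn : 2 ≤ n) {X : Set SylRule}
    (hX : ∀ R ∈ X, R.ants.card < n) (hs : SoundFor FragRstardag (IDerives X))
    {Θ : Set Formula} {θ : Formula} (h : IDerives X Θ θ) (hΘ : Θ = mostTrue n) :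
    θ ∈ mostTrue n := by
  induction h with
  | mem h => exact hΘ ▸ h
  | rule R g hR _ ih =>
    refine mem_of_entails hn (Δ := R.ants.image (Formula.subst g)) ?_
      (Finset.card_image_le.trans_lt (hX R hR)) ?_
    · intro ψ hψ
      obtain ⟨ψ', h', rfl⟩ := Finset.mem_image.1 hψ
      exact ih ψ' h' hΘ
    · exact hs _ _ (Set.subset_univ _) (Set.mem_univ _)
        (.rule R g hR fun ψ hψ => .mem (by simpa using ⟨ψ, hψ, rfl⟩))
  | ident _ he ih =>
    obtain ⟨j₀, h⟩ := ih hΘ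
    exact ⟨j₀, fun i hi hij => sat_of_formEquiv _ he (h i hi hij)⟩
  | raa hb _ ih =>
    -- If the conclusion is not in `Γ`, its negation already is, so no assumption was added.
    subst hΘ
    rcases mem_or_bar_mem hn _ with h | h
    · exact h
    · exact absurd (ih (Set.union_eq_self_of_subset_right (by simpa using h)))
        (not_absurd_mem hn hb)

/-- there is no finite set of syllogistic rules in `R*†` whose
indirect derivation relation is both sound and complete for `R*†`. -/
theorem no_sound_complete_indirect_system_for_Rstardag :
    ¬ ∃ X : Set SylRule, X.Finite ∧ (∀ R ∈ X, RuleIn FragRstardag R) ∧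
        SoundFor FragRstardag (IDerives X) ∧ CompleteFor FragRstardag (IDerives X) := by
  rintro ⟨X, hfin, -, hs, hc⟩
  let n := hfin.toFinset.sup (fun R => R.ants.card) + 2
  have hn : 2 ≤ n := Nat.le_add_left 2 _
  have hX : ∀ R ∈ X, R.ants.card < n := fun R hR =>
    (Finset.le_sup (f := fun R : SylRule => R.ants.card) (hfin.mem_toFinset.2 hR)).trans_lt
      (Nat.lt_add_of_pos_right two_pos)
  have hb : IsAbsurd (.ex (atomE 0) (atomE 0).bar) := ⟨_, rfl⟩
  have hent : Entails (mostTrue n) (.ex (atomE 0) (atomE 0).bar) :=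
    fun A hA M hM => absurd hM (mostTrue_unsat n M)
  exact not_absurd_mem hn hb
    (mem_of_iderives hn hX hs (hc _ _ (Set.subset_univ _) (Set.mem_univ _) hent) rfl)

end Syllogistic
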